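/- Let A ∈ O(Ω,H) be a POVM. Then a POVM B ∈ O(Λ,H) is compatible with A if and only if there exist POVMs R^(x) ∈ O(Λ,H), x ∈ Ω, such that B(y) = Σ_{x∈Ω} √A(x) R^(x)(y) √A(x) for all y ∈ Λ. -/

import Mathlib

open scoped Kronecker ComplexOrder MatrixOrder
open Matrix

noncomputable section

/-- Linear maps between matrix algebras, representing super-operators
`L(H) → L(K)` for finite-dimensional Hilbert spaces with index types `dH`, `dK`. -/
abbrev MatMap (dH dK : Type) : Type := Matrix dH dH ℂ →ₗ[ℂ] Matrix dK dK ℂ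

variable {Ω Λ dH dK dV dA dA' : Type}

/-- The Choi matrix of a super-operator. -/
def choiMatrix [DecidableEq dH] (Φ : MatMap dH dK) : Matrix (dH × dK) (dH × dK) ℂ :=
  fun p q => Φ (single p.1 q.1 1) p.2 q.2

/-- Complete positivity of a super-operator (positivity of its Choi matrix). -/
def IsCP [Fintype dH] [DecidableEq dH] [Fintype dK] (Φ : MatMap dH dK) : Prop :=
  (choiMatrix Φ).PosSemidef

/-- A quantum state: a positive semidefinite matrix of unit trace. -/
def IsState [Fintype dH] (ρ : Matrix dH dH ℂ) : Prop := ρ.PosSemidef ∧ ρ.trace = 1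

/-- Trace-nonincreasing super-operator. -/
def IsTNI [Fintype dH] [Fintype dK] (Φ : MatMap dH dK) : Prop :=
  ∀ ρ : Matrix dH dH ℂ, ρ.PosSemidef → (Φ ρ).trace ≤ ρ.trace

/-- Trace-preserving super-operator. -/
def IsTP [Fintype dH] [Fintype dK] (Φ : MatMap dH dK) : Prop :=
  ∀ ρ : Matrix dH dH ℂ, (Φ ρ).trace = ρ.trace

/-- A quantum instrument with outcome set `Ω` from system `dH` to system `dK`:
a family of completely positive trace-nonincreasing maps summing to a channel. -/
structure Instrument (Ω dH dK : Type) [Fintype Ω] [Fintype dH] [DecidableEq dH]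
    [Fintype dK] : Type where
  op : Ω → MatMap dH dK
  cp : ∀ x, IsCP (op x)
  tni : ∀ x, IsTNI (op x)
  tp : IsTP (∑ x, op x)

/-- A quantum channel: a completely positive trace-preserving super-operator. -/
structure Channel (dH dK : Type) [Fintype dH] [DecidableEq dH] [Fintype dK] : Type where
  map : MatMap dH dK
  cp : IsCP map
  tp : IsTP map

/-- A POVM with outcome set `Ω` on system `d`. -/
structure POVM (Ω d : Type) [Fintype Ω] [Fintype d] [DecidableEq d] : Type where
  elem : Ω → Matrix d d ℂ
  pos : ∀ x, (elem x).PosSemidef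
  sum_eq : ∑ x, elem x = 1

/-- The effect (induced POVM element) of an operation `Φ`:
the unique matrix `A` with `tr[A ρ] = tr[Φ ρ]` for all `ρ`. -/
def dualId [Fintype dH] [DecidableEq dH] [Fintype dK] (Φ : MatMap dH dK) :
    Matrix dH dH ℂ :=
  fun i j => (Φ (single j i 1)).trace

/-- Partial trace over the first tensor factor. -/
def ptraceL [Fintype dA] (M : Matrix (dA × dK) (dA × dK) ℂ) : Matrix dK dK ℂ :=
  fun i j => ∑ a, M (a, i) (a, j)

/-- Partial trace over the second tensor factor. -/
def ptraceR [Fintype dV] (M : Matrix (dK × dV) (dK × dV) ℂ) : Matrix dK dK ℂ :=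
  fun i j => ∑ b, M (i, b) (j, b)

/-- Compatibility of two instruments: existence of a joint instrument whose
partial-trace marginals (summed over the other outcome) reproduce both instruments
on all states. -/
def InsCompatible [Fintype Ω] [Fintype Λ] [Fintype dH] [DecidableEq dH] [Fintype dK]
    [Fintype dV] (I : Instrument Ω dH dK) (J : Instrument Λ dH dV) : Prop :=
  ∃ G : Instrument (Ω × Λ) dH (dK × dV),
    (∀ y, ∀ ρ : Matrix dH dH ℂ, IsState ρ → ∑ x, ptraceL (G.op (x, y) ρ) = J.op y ρ) ∧
    (∀ x, ∀ ρ : Matrix dH dH ℂ, IsState ρ → ∑ y, ptraceR (G.op (x, y) ρ) = I.op x ρ)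

/-- Compatibility of an instrument and a channel (a one-outcome instrument). -/
def InsChCompatible [Fintype Ω] [Fintype dH] [DecidableEq dH] [Fintype dK] [Fintype dV]
    (I : Instrument Ω dH dK) (Ψ : Channel dH dV) : Prop :=
  ∃ G : Instrument Ω dH (dK × dV),
    (∀ ρ : Matrix dH dH ℂ, IsState ρ → ∑ x, ptraceL (G.op x ρ) = Ψ.map ρ) ∧
    (∀ x, ∀ ρ : Matrix dH dH ℂ, IsState ρ → ptraceR (G.op x ρ) = I.op x ρ)

/-- Compatibility of two channels. -/
def ChCompatible [Fintype dH] [DecidableEq dH] [Fintype dK] [Fintype dV]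
    (Φ : Channel dH dK) (Ψ : Channel dH dV) : Prop :=
  ∃ Γ : Channel dH (dK × dV),
    (∀ ρ : Matrix dH dH ℂ, IsState ρ → ptraceL (Γ.map ρ) = Ψ.map ρ) ∧
    (∀ ρ : Matrix dH dH ℂ, IsState ρ → ptraceR (Γ.map ρ) = Φ.map ρ)

/-- Compatibility of a POVM and an instrument: existence of a joint instrument `G`
with `∑ x, G.op (x, y) = J.op y` and whose induced POVM has the POVM `A` as a margin. -/
def POVMInsCompatible [Fintype Ω] [Fintype Λ] [Fintype dH] [DecidableEq dH] [Fintype dK]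
    (A : POVM Ω dH) (J : Instrument Λ dH dK) : Prop :=
  ∃ G : Instrument (Ω × Λ) dH dK,
    (∀ y, ∑ x, G.op (x, y) = J.op y) ∧
    (∀ x, ∑ y, dualId (G.op (x, y)) = A.elem x)

/-- Compatibility (joint measurability) of two POVMs. -/
def POVMCompatible [Fintype Ω] [Fintype Λ] [Fintype dH] [DecidableEq dH]
    (A : POVM Ω dH) (B : POVM Λ dH) : Prop :=
  ∃ G : POVM (Ω × Λ) dH,
    (∀ y, ∑ x, G.elem (x, y) = B.elem y) ∧
    (∀ x, ∑ y, G.elem (x, y) = A.elem x)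

/-- Compatibility of a POVM and a channel: existence of an instrument implementing both. -/
def POVMChCompatible [Fintype Ω] [Fintype dH] [DecidableEq dH] [Fintype dK]
    (A : POVM Ω dH) (Ψ : Channel dH dK) : Prop :=
  ∃ G : Instrument Ω dH dK,
    (∑ x, G.op x) = Ψ.map ∧ ∀ x, dualId (G.op x) = A.elem x

/-- Instrument postprocessing: `I ⪯ J` if `I_x = ∑ y, R^(y)_x ∘ J_y` for
a family of instruments `R^(y)`. -/
def Postprocessed [Fintype Ω] [Fintype Λ] [Fintype dH] [DecidableEq dH] [Fintype dK]
    [Fintype dV] [DecidableEq dV] (I : Instrument Ω dH dK) (J : Instrument Λ dH dV) : Prop :=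
  ∃ R : Λ → Instrument Ω dV dK, ∀ x, I.op x = ∑ y, (R y).op x ∘ₗ J.op y

/-- An instrument `I` does not disturb an instrument `J`: `J_y ∘ Φ^I = J_y`. -/
def NonDisturbs [Fintype Ω] [Fintype Λ] [Fintype dH] [DecidableEq dH] [Fintype dV]
    (I : Instrument Ω dH dH) (J : Instrument Λ dH dV) : Prop :=
  ∀ y, J.op y ∘ₗ (∑ x, I.op x) = J.op y

/-- An instrument `I` does not disturb a channel `Ψ`: `Ψ ∘ Φ^I = Ψ`. -/
def InsNonDisturbsCh [Fintype Ω] [Fintype dH] [DecidableEq dH] [Fintype dV]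
    (I : Instrument Ω dH dH) (Ψ : Channel dH dV) : Prop :=
  Ψ.map ∘ₗ (∑ x, I.op x) = Ψ.map

/-- An instrument `I` does not disturb a POVM `A`:
the statistics of `A` are unchanged by the channel induced by `I`. -/
def InsNonDisturbsPOVM [Fintype Ω] [Fintype Λ] [Fintype dH] [DecidableEq dH]
    (I : Instrument Ω dH dH) (A : POVM Λ dH) : Prop :=
  ∀ y, ∀ ρ : Matrix dH dH ℂ,
    (A.elem y * ((∑ x, I.op x) ρ)).trace = (A.elem y * ρ).trace

/-- A POVM `A` does not disturb an instrument `J`: some instrument measuring `A`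
does not disturb `J`. -/
def POVMNonDisturbs [Fintype Ω] [Fintype Λ] [Fintype dH] [DecidableEq dH] [Fintype dV]
    (A : POVM Ω dH) (J : Instrument Λ dH dV) : Prop :=
  ∃ I : Instrument Ω dH dH, (∀ x, dualId (I.op x) = A.elem x) ∧ NonDisturbs I J

/-- A POVM `A` does not disturb a channel `Ψ`. -/
def POVMNonDisturbsCh [Fintype Ω] [Fintype dH] [DecidableEq dH] [Fintype dV]
    (A : POVM Ω dH) (Ψ : Channel dH dV) : Prop :=
  ∃ I : Instrument Ω dH dH, (∀ x, dualId (I.op x) = A.elem x) ∧ InsNonDisturbsCh I Ψ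

/-- A POVM `A` does not disturb a POVM `B`. -/
def POVMNonDisturbsPOVM [Fintype Ω] [Fintype Λ] [Fintype dH] [DecidableEq dH]
    (A : POVM Ω dH) (B : POVM Λ dH) : Prop :=
  ∃ I : Instrument Ω dH dH, (∀ x, dualId (I.op x) = A.elem x) ∧ InsNonDisturbsPOVM I B

/-- A sharp (projection-valued) POVM. -/
def IsSharp [Fintype Ω] [Fintype dH] [DecidableEq dH] (A : POVM Ω dH) : Prop :=
  ∀ x, A.elem x * A.elem x = A.elem x

/-- `(H_A, W, E)` is a dilation of the instrument `I`:
`W` is an isometry `H → H_A ⊗ K` and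
`I_x(ρ) = Tr_{H_A}[W ρ W* (E(x) ⊗ 1_K)]` on all states. -/
def IsDilation [Fintype Ω] [Fintype dH] [DecidableEq dH] [Fintype dK] [DecidableEq dK]
    [Fintype dA] [DecidableEq dA] (I : Instrument Ω dH dK)
    (W : Matrix (dA × dK) dH ℂ) (E : POVM Ω dA) : Prop :=
  Wᴴ * W = 1 ∧
  ∀ x, ∀ ρ : Matrix dH dH ℂ, IsState ρ →
    I.op x ρ = ptraceL (W * ρ * Wᴴ * (E.elem x ⊗ₖ (1 : Matrix dK dK ℂ)))

/-- Minimality of a Stinespring isometry `W : H → H_A ⊗ K`: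
the span of `{(1 ⊗ B) W φ}` is everything. -/
def IsMinimalW [Fintype dH] [Fintype dK] [DecidableEq dK] [Fintype dA] [DecidableEq dA]
    (W : Matrix (dA × dK) dH ℂ) : Prop :=
  Submodule.span ℂ {v : (dA × dK) → ℂ |
    ∃ (B : Matrix dK dK ℂ) (φ : dH → ℂ),
      v = ((1 : Matrix dA dA ℂ) ⊗ₖ B) *ᵥ (W *ᵥ φ)} = ⊤

/-- `IC` is the complementary instrument of the instrument dilated by `(W, E)`:
`IC_x(ρ) = Tr_K[(√E(x) ⊗ 1) W ρ W* (√E(x) ⊗ 1)]`. -/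
def IsComplementaryOf [Fintype Ω] [Fintype dH] [DecidableEq dH] [Fintype dK]
    [DecidableEq dK] [Fintype dA] [DecidableEq dA] (W : Matrix (dA × dK) dH ℂ) (E : POVM Ω dA)
    (IC : Instrument Ω dH dA) : Prop :=
  ∀ x, ∀ ρ : Matrix dH dH ℂ,
    IC.op x ρ =
      ptraceR ((CFC.sqrt (E.elem x) ⊗ₖ (1 : Matrix dK dK ℂ)) * (W * ρ * Wᴴ) *
        (CFC.sqrt (E.elem x) ⊗ₖ (1 : Matrix dK dK ℂ)))

/-- A measure-and-prepare instrument: `I_x(ρ) = tr[A(x) ρ] ξ_x`. -/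
def IsMeasureAndPrepare [Fintype Ω] [Fintype dH] [DecidableEq dH] [Fintype dK]
    [DecidableEq dK] (I : Instrument Ω dH dK) : Prop :=
  ∃ (A : POVM Ω dH) (ξ : Ω → Matrix dK dK ℂ),
    (∀ x, IsState (ξ x)) ∧
    ∀ x, ∀ ρ : Matrix dH dH ℂ, I.op x ρ = ((A.elem x * ρ).trace) • ξ x

/-- A pure state: a state which is a (rank-one) projection. -/
def IsPureState [Fintype dK] (ρ : Matrix dK dK ℂ) : Prop :=
  IsState ρ ∧ ρ * ρ = ρ

/-- A rank-1 POVM: every effect has rank at most one. -/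
def IsRankOnePOVM [Fintype Ω] [Fintype dH] [DecidableEq dH] (A : POVM Ω dH) : Prop :=
  ∀ x, (A.elem x).rank ≤ 1

/-- POVM postprocessing: `B(y) = ∑ x, ν x y • A(x)` for a stochastic matrix `ν`. -/
def POVMPostprocessed [Fintype Ω] [Fintype Λ] [Fintype dH] [DecidableEq dH]
    (B : POVM Λ dH) (A : POVM Ω dH) : Prop :=
  ∃ ν : Ω → Λ → ℝ, (∀ x y, 0 ≤ ν x y) ∧ (∀ x, ∑ y, ν x y = 1) ∧
    ∀ y, B.elem y = ∑ x, (ν x y : ℂ) • A.elem x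

/-- A measure-and-prepare instrument preparing pure states. -/
def IsMeasureAndPreparePure [Fintype Ω] [Fintype dH] [DecidableEq dH] [Fintype dK]
    [DecidableEq dK] (I : Instrument Ω dH dK) : Prop :=
  ∃ (A : POVM Ω dH) (ξ : Ω → Matrix dK dK ℂ),
    (∀ x, IsPureState (ξ x)) ∧
    ∀ x, ∀ ρ : Matrix dH dH ℂ, I.op x ρ = ((A.elem x * ρ).trace) • ξ x

/-- A Hermitian pseudo-inverse of a Hermitian matrix. -/
theorem exists_pinv_aux {d : Type} [Fintype d] [DecidableEq d] (S : Matrix d d ℂ)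
    (hS : IsSelfAdjoint S) :
    ∃ T : Matrix d d ℂ, IsSelfAdjoint T ∧ S * T = T * S ∧ S * T * S = S := by
  have hfin : (spectrum ℝ S).Finite := Matrix.finite_real_spectrum
  have hc : ∀ f : ℝ → ℝ, ContinuousOn f (spectrum ℝ S) := fun f => hfin.continuousOn f
  refine ⟨cfc (fun x : ℝ => x⁻¹) S, cfc_predicate _ _, ?_, ?_⟩
  · have h := cfc_commute_cfc (fun x : ℝ => x) (fun x : ℝ => x⁻¹) S
    rw [cfc_id' ℝ S] at h
    exact h
  · have h1 : S * cfc (fun x : ℝ => x⁻¹) S * S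
        = cfc (fun x : ℝ => x) S * cfc (fun x : ℝ => x⁻¹) S * cfc (fun x : ℝ => x) S := by
      rw [cfc_id' ℝ S]
    rw [h1, ← cfc_mul _ _ S (hc _) (hc _), ← cfc_mul _ _ S (hc _) (hc _)]
    conv_rhs => rw [← cfc_id' ℝ S]
    congr 1
    funext x
    exact mul_inv_mul_cancel x

/-- Decomposition of a family of positive matrices with sum `A` through `√A`. -/
theorem exists_povm_aux {Λ d : Type} [Fintype Λ] [Fintype d] [DecidableEq d]
    (B : POVM Λ d) (A : Matrix d d ℂ) (hA : A.PosSemidef)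
    (G : Λ → Matrix d d ℂ) (hG : ∀ y, (G y).PosSemidef) (hsum : ∑ y, G y = A) :
    ∃ R : POVM Λ d, ∀ y, G y = CFC.sqrt A * R.elem y * CFC.sqrt A := by
  classical
  rcases isEmpty_or_nonempty Λ with hΛ | ⟨⟨y0⟩⟩
  · exact ⟨B, fun y => (hΛ.false y).elim⟩
  have hSS : CFC.sqrt A * CFC.sqrt A = A := CFC.sqrt_mul_sqrt_self A hA.nonneg
  have hS : IsSelfAdjoint (CFC.sqrt A) := (CFC.sqrt_nonneg A).isSelfAdjoint
  generalize CFC.sqrt A = S at hSS hS ⊢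
  obtain ⟨T, hT, hST, hSTS⟩ := exists_pinv_aux S hS
  have hS' : Sᴴ = S := hS
  have hT' : Tᴴ = T := hT
  have hQH : (1 - S * T)ᴴ = 1 - S * T := by
    rw [conjTranspose_sub, conjTranspose_mul, hS', hT', ← hST, conjTranspose_one]
  have hSQ : S * (1 - S * T) = 0 := by
    rw [mul_sub, mul_one, hST, ← mul_assoc, hSTS, sub_self]
  have hQS : (1 - S * T) * S = 0 := by
    rw [sub_mul, one_mul, hSTS, sub_self]
  have hQQ : (1 - S * T) * (1 - S * T) = 1 - S * T := by
    rw [mul_sub, mul_one, ← mul_assoc, hQS, zero_mul, sub_zero]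
  have hTAT : T * A * T = S * T := by
    rw [← hSS, ← mul_assoc, ← hST, hSTS]
  generalize hQdef : 1 - S * T = Q at hQH hSQ hQS hQQ
  have hQpos : Q.PosSemidef := by
    have h := posSemidef_conjTranspose_mul_self Q
    rwa [hQH, hQQ] at h
  have hz : ∑ y, Q * G y * Q = 0 := by
    rw [← Finset.sum_mul, ← Finset.mul_sum, hsum, ← hSS, ← mul_assoc, hQS, zero_mul, zero_mul]
  have hpos : ∀ y, (Q * G y * Q).PosSemidef := fun y => by
    have h := (hG y).conjTranspose_mul_mul_same Q
    rwa [hQH] at h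
  have hz' : ∀ y, Q * G y * Q = 0 := fun y =>
    (Finset.sum_eq_zero_iff_of_nonneg (fun y _ => (hpos y).nonneg)).1 hz y (Finset.mem_univ y)
  have hGQ : ∀ y, G y * Q = 0 := fun y => by
    have hC : CFC.sqrt (G y) * CFC.sqrt (G y) = G y := CFC.sqrt_mul_sqrt_self _ (hG y).nonneg
    have hCH : (CFC.sqrt (G y))ᴴ = CFC.sqrt (G y) := (CFC.sqrt_nonneg (G y)).isSelfAdjoint
    have h0 : CFC.sqrt (G y) * Q = 0 := by
      rw [← conjTranspose_mul_self_eq_zero, conjTranspose_mul, hCH, hQH, mul_assoc,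
        ← mul_assoc (CFC.sqrt (G y)), hC, ← mul_assoc, hz']
    rw [← hC, mul_assoc, h0, mul_zero]
  have hQG : ∀ y, Q * G y = 0 := fun y => by
    have h := congrArg conjTranspose (hGQ y)
    rwa [conjTranspose_mul, hQH, (hG y).1, conjTranspose_zero] at h
  have hP : S * T = 1 - Q := by rw [← hQdef, sub_sub_cancel]
  refine ⟨⟨fun y => T * G y * T + if y = y0 then Q else 0, fun y => ?_, ?_⟩, fun y => ?_⟩
  · refine PosSemidef.add ?_ ?_
    · have h := (hG y).conjTranspose_mul_mul_same T
      rwa [hT'] at h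
    · split_ifs
      · exact hQpos
      · exact PosSemidef.zero
  · rw [Finset.sum_add_distrib, ← Finset.sum_mul, ← Finset.mul_sum, hsum, hTAT, hP]
    simp
  · have h1 : S * (if y = y0 then Q else 0) = 0 := by
      split_ifs
      · exact hSQ
      · exact mul_zero S
    have h2 : S * (T * G y * T) * S = (S * T) * G y * (T * S) := by
      simp only [mul_assoc]
    show G y = S * (T * G y * T + if y = y0 then Q else 0) * S
    rw [mul_add, h1, add_zero, h2, ← hST, hP, sub_mul, one_mul, hQG, sub_zero, mul_sub, mul_one,
      hGQ, sub_zero]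

/-- A POVM `B` is compatible with a POVM `A` if and only if there are
POVMs `R^(x)` with `B(y) = ∑ x, √A(x) R^(x)(y) √A(x)`. -/
theorem povm_compatible_iff_sqrt_decomposition
    [Fintype Ω] [Fintype Λ] [Fintype dH] [DecidableEq dH]
    (A : POVM Ω dH) (B : POVM Λ dH) :
    POVMCompatible A B ↔
      ∃ R : Ω → POVM Λ dH,
        ∀ y, B.elem y = ∑ x, CFC.sqrt (A.elem x) * (R x).elem y * CFC.sqrt (A.elem x) := by
  constructor
  · rintro ⟨G, hB, hA⟩
    have h := fun x => exists_povm_aux B (A.elem x) (A.pos x) (fun y => G.elem (x, y))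
      (fun y => G.pos (x, y)) (hA x)
    choose R hR using h
    refine ⟨R, fun y => ?_⟩
    rw [← hB y]
    exact Finset.sum_congr rfl fun x _ => hR x y
  · rintro ⟨R, hR⟩
    have hA : ∀ x, ∑ y, CFC.sqrt (A.elem x) * (R x).elem y * CFC.sqrt (A.elem x) = A.elem x := by
      intro x
      rw [← Finset.sum_mul, ← Finset.mul_sum, (R x).sum_eq, mul_one]
      exact CFC.sqrt_mul_sqrt_self _ (A.pos x).nonneg
    refine ⟨⟨fun p => CFC.sqrt (A.elem p.1) * (R p.1).elem p.2 * CFC.sqrt (A.elem p.1),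
      fun p => ?_, ?_⟩, fun y => (hR y).symm, hA⟩
    · have h := ((R p.1).pos p.2).conjTranspose_mul_mul_same (CFC.sqrt (A.elem p.1))
      have hS : (CFC.sqrt (A.elem p.1))ᴴ = CFC.sqrt (A.elem p.1) :=
        (CFC.sqrt_nonneg (A.elem p.1)).isSelfAdjoint
      rwa [hS] at h
    · rw [Fintype.sum_prod_type, ← A.sum_eq]
      exact Finset.sum_congr rfl fun x _ => hA x
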